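/- Let [a,b] ⊂ ℝ be a compact interval and let E ⊂ (a,b) be a set of Lebesgue measure zero. Suppose F is a real-valued function defined and differentiable at every point of [a,b] \ E with derivative f there, and suppose F is basically summable (BS_δ) on E to the real number ℜ. Then for every ε > 0 there exists a gauge δ : [a,b] → (0,∞) such that for every δ-fine tagged partition P of [a,b] in which every subinterval intersecting E has its tag in E, the Riemann sum satisfies |Σ_{([u,v],x) ∈ P} f_ex(x)(v − u) − ((F(b) − F(a)) − ℜ)| < ε ((b − a) + 1). -/

import Mathlib

open scoped Classical

/-- A tagged partition of `[a,b]`: division points `t 0 = a ≤ t 1 ≤ ⋯ ≤ t n = b`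
with a tag `tag i ∈ [t i, t (i+1)]` for each subinterval. -/
structure TaggedPartition (a b : ℝ) where
  n : ℕ
  t : ℕ → ℝ
  tag : ℕ → ℝ
  t_zero : t 0 = a
  t_last : t n = b
  mono : ∀ i < n, t i ≤ t (i + 1)
  tag_mem : ∀ i < n, tag i ∈ Set.Icc (t i) (t (i + 1))

/-- A gauge on `[a,b]` is a function that is positive on `[a,b]`. -/
def IsGauge (a b : ℝ) (δ : ℝ → ℝ) : Prop :=
  ∀ x ∈ Set.Icc a b, 0 < δ x

/-- `P` is `δ`-fine: each subinterval is contained in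
`(tag i - δ (tag i), tag i + δ (tag i))`. -/
def TaggedPartition.IsFine {a b : ℝ} (P : TaggedPartition a b) (δ : ℝ → ℝ) : Prop :=
  ∀ i < P.n, Set.Icc (P.t i) (P.t (i + 1)) ⊆
    Set.Ioo (P.tag i - δ (P.tag i)) (P.tag i + δ (P.tag i))

/-- Every subinterval of `P` that intersects `E` has its tag in `E`
(membership in the family `𝒫_δ[a,b]|_E`). -/
def TaggedPartition.TagsIn {a b : ℝ} (P : TaggedPartition a b) (E : Set ℝ) : Prop :=
  ∀ i < P.n, (Set.Icc (P.t i) (P.t (i + 1)) ∩ E).Nonempty → P.tag i ∈ E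

/-- The Riemann sum `Σ g(xᵢ)(bᵢ - aᵢ)` of `g` over `P`. -/
def TaggedPartition.riemannSum {a b : ℝ} (P : TaggedPartition a b) (g : ℝ → ℝ) : ℝ :=
  ∑ i ∈ Finset.range P.n, g (P.tag i) * (P.t (i + 1) - P.t i)

/-- The sum `Σ (F(bᵢ) - F(aᵢ))` of increments of `F` over the restriction `P|_E`,
i.e. over those pairs of `P` whose interval meets `E` and whose tag lies in `E`. -/
noncomputable def TaggedPartition.restSum {a b : ℝ} (P : TaggedPartition a b) (F : ℝ → ℝ)
    (E : Set ℝ) : ℝ :=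
  ∑ i ∈ Finset.range P.n,
    if (Set.Icc (P.t i) (P.t (i + 1)) ∩ E).Nonempty ∧ P.tag i ∈ E then
      F (P.t (i + 1)) - F (P.t i)
    else 0

/-- `F` is basically summable (BS_δ) on `E` to `R`. -/
def BasicallySummable (a b : ℝ) (F : ℝ → ℝ) (E : Set ℝ) (R : ℝ) : Prop :=
  ∀ ε > 0, ∃ δ : ℝ → ℝ, IsGauge a b δ ∧
    ∀ P : TaggedPartition a b, P.IsFine δ → P.TagsIn E → |P.restSum F E - R| < ε

/-- `g` is generalized Riemann (Henstock–Kurzweil) integrable on `[a,b]` to `I`,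
using `δ`-fine partitions in `𝒫_δ[a,b]|_E`. -/
def HKIntegrableTo (a b : ℝ) (E : Set ℝ) (g : ℝ → ℝ) (I : ℝ) : Prop :=
  ∀ ε > 0, ∃ δ : ℝ → ℝ, IsGauge a b δ ∧
    ∀ P : TaggedPartition a b, P.IsFine δ → P.TagsIn E → |P.riemannSum g - I| < ε

/-!
Write `F_ex = E.piecewise 0 F` and split the telescoping sum of its increments by the location of
the tags. The increments with tag in `E` form the sum over `P|_E`, which is close to `R`. An
interval with tag `x ∉ E` misses `E` altogether, so there `F_ex = F`, and differentiability at `x`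
makes `f x * (v - u)` differ from `F v - F u` by at most `η * (v - u)` on fine intervals `[u, v]`;
these errors add up to at most `η * (b - a)`.
-/

theorem exists_norm_smul_sub_increment_le_of_hasDerivWithinAt {V : Type*} [NormedAddCommGroup V]
    [NormedSpace ℝ V] {F : ℝ → V} {F' : V} {s : Set ℝ} {x η : ℝ}
    (hF : HasDerivWithinAt F F' s x) (hη : 0 < η) :
    ∃ δ > 0, ∀ u ∈ s, ∀ v ∈ s, x ∈ Set.Icc u v → Set.Icc u v ⊆ Set.Ioo (x - δ) (x + δ) →
      ‖(v - u) • F' - (F v - F u)‖ ≤ η * (v - u) := by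
  obtain ⟨δ, hδ, hlin⟩ := Metric.eventually_nhds_iff.1 <| eventually_nhdsWithin_iff.1 <|
    (hasDerivWithinAt_iff_isLittleO.1 hF).def hη
  refine ⟨δ, hδ, fun u hu v hv hx hfine => ?_⟩
  have huv : u ≤ v := hx.1.trans hx.2
  rw [← Real.ball_eq_Ioo] at hfine
  have hleft : ‖F u - F x - (u - x) • F'‖ ≤ η * (x - u) := by
    have hdist : dist u x < δ := hfine (Set.left_mem_Icc.2 huv)
    simpa only [Real.norm_of_nonpos (sub_nonpos.2 hx.1), neg_sub] using hlin hdist hu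
  have hright : ‖F v - F x - (v - x) • F'‖ ≤ η * (v - x) := by
    have hdist : dist v x < δ := hfine (Set.right_mem_Icc.2 huv)
    simpa only [Real.norm_of_nonneg (sub_nonneg.2 hx.2)] using hlin hdist hv
  calc ‖(v - u) • F' - (F v - F u)‖
      = ‖(F u - F x - (u - x) • F') - (F v - F x - (v - x) • F')‖ := by congr 1; module
    _ ≤ η * (x - u) + η * (v - x) := norm_sub_le_of_le hleft hright
    _ = η * (v - u) := by ring

namespace TaggedPartition

variable {a b : ℝ} {P : TaggedPartition a b} {E : Set ℝ} {i : ℕ}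

theorem monotoneOn_t (P : TaggedPartition a b) : MonotoneOn P.t (Set.Iic P.n) :=
  monotoneOn_of_le_add_one Set.ordConnected_Iic fun i _ _ hi => P.mono i (Nat.lt_of_succ_le hi)

theorem t_mem_Icc (P : TaggedPartition a b) (hi : i ≤ P.n) : P.t i ∈ Set.Icc a b :=
  ⟨P.t_zero.ge.trans (P.monotoneOn_t (Nat.zero_le P.n) hi (Nat.zero_le i)),
    (P.monotoneOn_t hi (le_refl P.n) hi).trans P.t_last.le⟩

theorem tag_mem_Icc (P : TaggedPartition a b) (hi : i < P.n) : P.tag i ∈ Set.Icc a b :=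
  Set.Icc_subset_Icc (P.t_mem_Icc hi.le).1 (P.t_mem_Icc hi).2 (P.tag_mem i hi)

theorem sum_increments {V : Type*} [AddCommGroup V] (P : TaggedPartition a b) (G : ℝ → V) :
    ∑ i ∈ Finset.range P.n, (G (P.t (i + 1)) - G (P.t i)) = G b - G a := by
  rw [Finset.sum_range_sub fun i => G (P.t i), P.t_zero, P.t_last]

theorem IsFine.mono {δ δ' : ℝ → ℝ} (hP : P.IsFine δ) (hδ : δ ≤ δ') : P.IsFine δ' :=
  fun i hi => (hP i hi).trans <|
    Set.Ioo_subset_Ioo (sub_le_sub_left (hδ _) _) (add_le_add_right (hδ _) _)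

theorem TagsIn.disjoint (hT : P.TagsIn E) (hi : i < P.n) (htag : P.tag i ∉ E) :
    Disjoint (Set.Icc (P.t i) (P.t (i + 1))) E :=
  Set.disjoint_iff_inter_eq_empty.2 <| Set.not_nonempty_iff_eq_empty.1 <| mt (hT i hi) htag

theorem TagsIn.left_notMem (hT : P.TagsIn E) (hi : i < P.n) (htag : P.tag i ∉ E) :
    P.t i ∉ E :=
  (hT.disjoint hi htag).notMem_of_mem_left (Set.left_mem_Icc.2 (P.mono i hi))

theorem TagsIn.right_notMem (hT : P.TagsIn E) (hi : i < P.n) (htag : P.tag i ∉ E) :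
    P.t (i + 1) ∉ E :=
  (hT.disjoint hi htag).notMem_of_mem_left (Set.right_mem_Icc.2 (P.mono i hi))

theorem restSum_eq_sum_tag_mem (P : TaggedPartition a b) (G : ℝ → ℝ) (E : Set ℝ) :
    P.restSum G E =
      ∑ i ∈ Finset.range P.n, if P.tag i ∈ E then G (P.t (i + 1)) - G (P.t i) else 0 := by
  refine Finset.sum_congr rfl fun i hi => if_congr ?_ rfl rfl
  exact and_iff_right_of_imp fun htag => ⟨_, P.tag_mem i (Finset.mem_range.1 hi), htag⟩

theorem TagsIn.riemannSum_sub_increment_sub_restSum (hT : P.TagsIn E) (F f : ℝ → ℝ) :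
    P.riemannSum (E.piecewise 0 f) -
        (E.piecewise 0 F b - E.piecewise 0 F a - P.restSum (E.piecewise 0 F) E) =
      ∑ i ∈ Finset.range P.n with P.tag i ∉ E,
        (f (P.tag i) * (P.t (i + 1) - P.t i) - (F (P.t (i + 1)) - F (P.t i))) := by
  rw [← P.sum_increments, restSum_eq_sum_tag_mem, riemannSum, ← Finset.sum_sub_distrib,
    ← Finset.sum_sub_distrib, Finset.sum_filter]
  refine Finset.sum_congr rfl fun i hi => ?_
  rw [Finset.mem_range] at hi
  by_cases htag : P.tag i ∈ E
  · simp [htag]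
  · simp [htag, hT.left_notMem hi htag, hT.right_notMem hi htag]

theorem norm_sum_le_of_forall_norm_le {V : Type*} [SeminormedAddCommGroup V]
    (P : TaggedPartition a b) {s : Finset ℕ} (hs : s ⊆ Finset.range P.n) {r : ℕ → V} {η : ℝ}
    (hη : 0 ≤ η) (hr : ∀ i ∈ s, ‖r i‖ ≤ η * (P.t (i + 1) - P.t i)) :
    ‖∑ i ∈ s, r i‖ ≤ η * (b - a) :=
  calc ‖∑ i ∈ s, r i‖
      ≤ ∑ i ∈ s, η * (P.t (i + 1) - P.t i) := norm_sum_le_of_le s hr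
    _ ≤ ∑ i ∈ Finset.range P.n, η * (P.t (i + 1) - P.t i) :=
        Finset.sum_le_sum_of_subset_of_nonneg hs fun i hi _ =>
          mul_nonneg hη (sub_nonneg.2 (P.mono i (Finset.mem_range.1 hi)))
    _ = η * (b - a) := by rw [← Finset.mul_sum, P.sum_increments fun x => x]

end TaggedPartition

section Integration

variable {a b : ℝ} {E : Set ℝ} {F f : ℝ → ℝ}

theorem exists_isGauge_abs_riemannSum_sub_le
    (hF : ∀ x ∈ Set.Icc a b \ E, HasDerivWithinAt F (f x) (Set.Icc a b \ E) x)
    {η : ℝ} (hη : 0 < η) :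
    ∃ δ : ℝ → ℝ, IsGauge a b δ ∧ ∀ P : TaggedPartition a b, P.IsFine δ → P.TagsIn E →
      |P.riemannSum (E.piecewise 0 f) -
          (E.piecewise 0 F b - E.piecewise 0 F a - P.restSum (E.piecewise 0 F) E)| ≤
        η * (b - a) := by
  choose! δ hδ hlin using fun x hx =>
    exists_norm_smul_sub_increment_le_of_hasDerivWithinAt (hF x hx) hη
  refine ⟨E.piecewise 1 δ, fun x hx => ?_, fun P hP hT => ?_⟩
  · by_cases hxE : x ∈ E
    · simp [hxE]
    · simpa [hxE] using hδ x ⟨hx, hxE⟩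
  · rw [hT.riemannSum_sub_increment_sub_restSum, ← Real.norm_eq_abs]
    refine P.norm_sum_le_of_forall_norm_le (Finset.filter_subset (P.tag · ∉ E) _) hη.le
      fun i hi => ?_
    obtain ⟨hi, htag⟩ := Finset.mem_filter.1 hi
    rw [Finset.mem_range] at hi
    have hfine := hP i hi
    rw [Set.piecewise_eq_of_notMem _ _ _ htag] at hfine
    rw [mul_comm, ← smul_eq_mul]
    exact hlin _ ⟨P.tag_mem_Icc hi, htag⟩ _ ⟨P.t_mem_Icc hi.le, hT.left_notMem hi htag⟩
      _ ⟨P.t_mem_Icc hi, hT.right_notMem hi htag⟩ (P.tag_mem i hi) hfine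

theorem statement2_general (hab : a ≤ b) (ha : a ∉ E) (hb : b ∉ E)
    (hF : ∀ x ∈ Set.Icc a b \ E, HasDerivWithinAt F (f x) (Set.Icc a b \ E) x) {R : ℝ}
    (hBS : BasicallySummable a b (E.piecewise 0 F) E R) :
    HKIntegrableTo a b E (E.piecewise 0 f) ((F b - F a) - R) := by
  intro ε hε
  have hlen : 0 < (b - a) + 1 := by linarith
  obtain ⟨δ₁, hδ₁, hrest⟩ := hBS (ε / 2) (half_pos hε)
  obtain ⟨δ₂, hδ₂, hriemann⟩ :=
    exists_isGauge_abs_riemannSum_sub_le hF (div_pos (half_pos hε) hlen)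
  refine ⟨δ₁ ⊓ δ₂, fun x hx => lt_min (hδ₁ x hx) (hδ₂ x hx), fun P hP hT => ?_⟩
  have hclose := hriemann P (hP.mono inf_le_right) hT
  rw [Set.piecewise_eq_of_notMem _ _ _ ha, Set.piecewise_eq_of_notMem _ _ _ hb] at hclose
  have herror : ε / 2 / ((b - a) + 1) * (b - a) ≤ ε / 2 := by
    rw [div_mul_eq_mul_div, div_le_iff₀ hlen]
    gcongr
    linarith
  calc |P.riemannSum (E.piecewise 0 f) - ((F b - F a) - R)|
      = |(P.riemannSum (E.piecewise 0 f) - (F b - F a - P.restSum (E.piecewise 0 F) E)) -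
          (P.restSum (E.piecewise 0 F) E - R)| := by congr 1; ring
    _ ≤ |P.riemannSum (E.piecewise 0 f) - (F b - F a - P.restSum (E.piecewise 0 F) E)| +
          |P.restSum (E.piecewise 0 F) E - R| := abs_sub _ _
    _ < ε / 2 + ε / 2 :=
        add_lt_add_of_le_of_lt (hclose.trans herror) (hrest P (hP.mono inf_le_left) hT)
    _ = ε := add_halves ε

end Integration

/-- If `F` is differentiable with derivative `f` on `[a,b] \ E`,
where `E ⊂ (a,b)` has Lebesgue measure zero, and `F_ex` is basically summable on
`E` to `R`, then for every `ε > 0` there is a gauge `δ` such that every `δ`-fine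
tagged partition `P` with tags in `E` on subintervals meeting `E` satisfies
`|Σ f_ex(xᵢ)(bᵢ - aᵢ) - ((F b - F a) - R)| < ε ((b - a) + 1)`. -/
theorem statement2 (a b : ℝ) (hab : a ≤ b) (E : Set ℝ) (hE : E ⊆ Set.Ioo a b)
    (hE0 : MeasureTheory.volume E = 0) (F f : ℝ → ℝ)
    (hF : ∀ x ∈ Set.Icc a b \ E, HasDerivWithinAt F (f x) (Set.Icc a b) x)
    (R : ℝ)
    (hBS : BasicallySummable a b (fun x => if x ∈ E then 0 else F x) E R) :
    ∀ ε > 0, ∃ δ : ℝ → ℝ, IsGauge a b δ ∧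
      ∀ P : TaggedPartition a b, P.IsFine δ → P.TagsIn E →
        |P.riemannSum (fun x => if x ∈ E then 0 else f x) - ((F b - F a) - R)| <
          ε * ((b - a) + 1) := by
  intro ε hε
  exact statement2_general hab (fun h => (hE h).1.false) (fun h => (hE h).2.false)
    (fun x hx => (hF x hx).mono Set.sdiff_subset) hBS _ (mul_pos hε (by linarith))
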